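/- arXiv:math/0703198 — 4 statements merged into one kernel-verified Lean document; each statement's English description precedes it below -/
import Mathlib

section
/- Let d ≥ 1, We > 0, let G : ℝ → Matrix (Fin d) (Fin d) ℝ be continuous, and let B : ℝ → Matrix (Fin d) (Fin d) ℝ be differentiable with B'(t) = G(t) B(t) + B(t) G(t)ᵀ − (1/We) B(t) + (1/We) I for all t ≥ 0. If B(0) is symmetric positive definite, then B(t) is symmetric positive definite for every t ≥ 0. -/
/-!
Symmetry: the skew part `S = B - Bᵀ` solves the homogeneous linear equation
`S' = G S + S Gᵀ - (1/We) S` with `S 0 = 0`, so Grönwall's inequality gives `S = 0` on `[0, ∞)`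
(`oldroydB_symm`).

Positivity is a first-exit argument. If it fails, compactness of the unit sphere provides a first
time `τ > 0` and a unit vector `v` with `vᵀ B(τ) v ≤ 0`. By continuity `B(τ)` is positive
semidefinite, so `B(τ) v = 0`, and the equation gives
`(d/dt) vᵀ B v = (1/We) vᵀ v > 0` at `τ`. But `vᵀ B v` is positive before `τ` and vanishes at `τ`,
so this derivative is at most `0`.
-/

open Matrix

attribute [local instance] Matrix.linftyOpNormedRing Matrix.linftyOpNormedAlgebra

lemma hasDerivAt_matrix_of_entries {d : ℕ} {B : ℝ → Matrix (Fin d) (Fin d) ℝ}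
    {B' : Matrix (Fin d) (Fin d) ℝ} {t : ℝ}
    (h : ∀ i j, HasDerivAt (fun s => B s i j) (B' i j) t) : HasDerivAt B B' t := by
  have key : HasDerivAt (fun s => ∑ i, ∑ j, B s i j • single i j (1 : ℝ))
      (∑ i, ∑ j, B' i j • single i j (1 : ℝ)) t :=
    HasDerivAt.fun_sum fun i _ => HasDerivAt.fun_sum fun j _ => (h i j).smul_const _
  have e : ∀ A : Matrix (Fin d) (Fin d) ℝ, ∑ i, ∑ j, A i j • single i j (1 : ℝ) = A := by
    intro A
    conv_rhs => rw [matrix_eq_sum_single A]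
    simp [smul_single]
  simpa only [e] using key

lemma oldroydB_symm {d : ℕ} {c : ℝ} {G B B' : ℝ → Matrix (Fin d) (Fin d) ℝ}
    (hG : Continuous G) (hB : ∀ t, HasDerivAt B (B' t) t)
    (hBt : ∀ t, HasDerivAt (fun s => (B s)ᵀ) (B' t)ᵀ t)
    (heq : ∀ t ≥ 0, B' t = G t * B t + B t * (G t)ᵀ - c • B t
      + c • (1 : Matrix (Fin d) (Fin d) ℝ))
    (h0 : (B 0)ᵀ = B 0) {t : ℝ} (ht : 0 ≤ t) : (B t)ᵀ = B t := by
  obtain ⟨M, hM⟩ := (isCompact_Icc (a := (0 : ℝ)) (b := t)).exists_bound_of_continuousOn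
    hG.continuousOn
  obtain ⟨N, hN⟩ := (isCompact_Icc (a := (0 : ℝ)) (b := t)).exists_bound_of_continuousOn
    (f := fun s => (G s)ᵀ) hG.matrix_transpose.continuousOn
  have hS : ∀ s, HasDerivAt (fun s => B s - (B s)ᵀ) (B' s - (B' s)ᵀ) s :=
    fun s => (hB s).sub (hBt s)
  have hS' : ∀ s ≥ 0, B' s - (B' s)ᵀ = G s * (B s - (B s)ᵀ) + (B s - (B s)ᵀ) * (G s)ᵀ
      - c • (B s - (B s)ᵀ) := by
    intro s hs
    rw [heq s hs]
    simp only [transpose_add, transpose_sub, transpose_mul, transpose_transpose,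
      transpose_smul, transpose_one, mul_sub, sub_mul, smul_sub]
    abel
  have key := norm_le_gronwallBound_of_norm_deriv_right_le (δ := 0) (K := M + N + |c|) (ε := 0)
    (f := fun s => B s - (B s)ᵀ) (f' := fun s => B' s - (B' s)ᵀ) (a := 0) (b := t)
    (fun s _ => (hS s).continuousAt.continuousWithinAt)
    (fun s _ => (hS s).hasDerivWithinAt) (by simp [h0]) (by
      intro s hs
      have hs' : s ∈ Set.Icc 0 t := ⟨hs.1, hs.2.le⟩
      rw [hS' s hs.1]
      have n1 := norm_sub_le (G s * (B s - (B s)ᵀ) + (B s - (B s)ᵀ) * (G s)ᵀ)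
        (c • (B s - (B s)ᵀ))
      have n2 := norm_add_le (G s * (B s - (B s)ᵀ)) ((B s - (B s)ᵀ) * (G s)ᵀ)
      have n3 := norm_mul_le (G s) (B s - (B s)ᵀ)
      have n4 := norm_mul_le (B s - (B s)ᵀ) (G s)ᵀ
      have n5 : ‖c • (B s - (B s)ᵀ)‖ = |c| * ‖B s - (B s)ᵀ‖ := norm_smul _ _
      have n6 := mul_le_mul_of_nonneg_right (hM s hs') (norm_nonneg (B s - (B s)ᵀ))
      have n7 := mul_le_mul_of_nonneg_left (hN s hs') (norm_nonneg (B s - (B s)ᵀ))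
      linarith) t ⟨ht, le_rfl⟩
  rw [gronwallBound_ε0_δ0] at key
  exact (sub_eq_zero.mp (norm_le_zero_iff.mp key)).symm

/-- A function that is nonnegative just before one of its zeros has nonpositive derivative
there. -/
lemma deriv_nonpos_of_nonneg_left {f : ℝ → ℝ} {f' τ : ℝ} (hτ : 0 < τ) (hf : HasDerivAt f f' τ)
    (h0 : f τ = 0) (hpos : ∀ s, 0 ≤ s → s < τ → 0 ≤ f s) : f' ≤ 0 := by
  have h1 := (hasDerivWithinAt_iff_tendsto_slope' (s := Set.Iio τ) (by simp)).mp
    hf.hasDerivWithinAt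
  refine le_of_tendsto h1 ?_
  filter_upwards [Ioo_mem_nhdsLT hτ] with s hs
  rw [slope_def_field, h0]
  exact div_nonpos_of_nonneg_of_nonpos (by simpa using hpos s hs.1.le hs.2)
    (sub_nonpos.2 hs.2.le)

/-- Let `d ≥ 1`, `We > 0`, let `G : ℝ → Matrix (Fin d) (Fin d) ℝ` be continuous (entrywise),
and let `B : ℝ → Matrix (Fin d) (Fin d) ℝ` be differentiable (entrywise) with
`B' t = G t * B t + B t * (G t)ᵀ - (1/We) • B t + (1/We) • I` for all `t ≥ 0`.
If `B 0` is symmetric positive definite, then `B t` is symmetric positive definite for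
every `t ≥ 0`. -/
theorem posDef_of_oldroydB_ode (d : ℕ) (hd : 1 ≤ d) (We : ℝ) (hWe : 0 < We)
    (G B B' : ℝ → Matrix (Fin d) (Fin d) ℝ)
    (hG : ∀ i j, Continuous fun t => G t i j)
    (hB : ∀ t i j, HasDerivAt (fun s => B s i j) (B' t i j) t)
    (heq : ∀ t ≥ 0, B' t = G t * B t + B t * (G t)ᵀ - (1 / We) • B t
      + (1 / We) • (1 : Matrix (Fin d) (Fin d) ℝ))
    (h0 : (B 0).PosDef) :
    ∀ t ≥ 0, (B t).PosDef := by
  have hsymm : ∀ t ≥ 0, (B t).IsHermitian := by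
    intro t ht
    have h0' : (B 0)ᵀ = B 0 := by simpa [IsHermitian, conjTranspose_eq_transpose_of_trivial]
      using h0.isHermitian
    have := oldroydB_symm (continuous_matrix hG)
      (fun t => hasDerivAt_matrix_of_entries (hB t))
      (fun t => hasDerivAt_matrix_of_entries fun i j => hB t j i) heq h0' ht
    simpa [IsHermitian, conjTranspose_eq_transpose_of_trivial] using this
  have hBc : Continuous B :=
    continuous_matrix fun i j => continuous_iff_continuousAt.2 fun t => (hB t i j).continuousAt
  have hq : Continuous fun p : ℝ × (Fin d → ℝ) => p.2 ⬝ᵥ (B p.1 *ᵥ p.2) :=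
    continuous_snd.dotProduct ((hBc.comp continuous_fst).matrix_mulVec continuous_snd)
  -- Positivity of a quadratic form only has to be tested on the unit sphere.
  have hscale : ∀ (A : Matrix (Fin d) (Fin d) ℝ) (w : Fin d → ℝ), w ≠ 0 →
      ∃ u ∈ Metric.sphere (0 : Fin d → ℝ) 1, ∃ r : ℝ, 0 < r ∧
        w ⬝ᵥ (A *ᵥ w) = r * (u ⬝ᵥ (A *ᵥ u)) := by
    intro A w hw
    have hn : 0 < ‖w‖ := norm_pos_iff.2 hw
    refine ⟨‖w‖⁻¹ • w, by simp [norm_smul, hn.ne'], ‖w‖ ^ 2, by positivity, ?_⟩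
    rw [mulVec_smul, smul_dotProduct, dotProduct_smul, smul_eq_mul, smul_eq_mul]
    field_simp
  intro T hT
  by_contra hcon
  let K : Set (ℝ × (Fin d → ℝ)) :=
    (Set.Icc 0 T ×ˢ Metric.sphere 0 1) ∩ {p | p.2 ⬝ᵥ (B p.1 *ᵥ p.2) ≤ 0}
  have hK : IsCompact K := (isCompact_Icc.prod (isCompact_sphere _ _)).inter_right
    (isClosed_le hq continuous_const)
  have hKne : K.Nonempty := by
    by_contra hne
    refine hcon (PosDef.of_dotProduct_mulVec_pos (hsymm T hT) fun w hw => ?_)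
    obtain ⟨u, hu, r, hr, e⟩ := hscale (B T) w hw
    rw [star_trivial, e]
    refine mul_pos hr (not_le.1 fun hle => hne ⟨(T, u), ⟨⟨hT, le_rfl⟩, hu⟩, hle⟩)
  obtain ⟨⟨τ, v⟩, ⟨⟨hτ, hv⟩, hle⟩, hmin⟩ := hK.exists_isMinOn hKne continuous_fst.continuousOn
  simp only [Set.mem_ofPred_eq] at hτ hv hle
  have hv0 : v ≠ 0 := by
    rintro rfl
    simp at hv
  have hτ0 : 0 < τ := by
    refine lt_of_le_of_ne hτ.1 fun h => ?_
    subst h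
    have := h0.dotProduct_mulVec_pos hv0
    rw [star_trivial] at this
    linarith
  have hbefore : ∀ s, 0 ≤ s → s < τ → ∀ w, 0 ≤ w ⬝ᵥ (B s *ᵥ w) := by
    intro s hs hsτ w
    by_cases hw : w = 0
    · simp [hw]
    obtain ⟨u, hu, r, hr, e⟩ := hscale (B s) w hw
    rw [e]
    refine mul_nonneg hr.le (not_lt.1 fun hlt => ?_)
    have := hmin (show (s, u) ∈ K from ⟨⟨⟨hs, hsτ.le.trans hτ.2⟩, hu⟩, hlt.le⟩)
    exact absurd (show τ ≤ s from this) (not_le.2 hsτ)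
  have hpsd : (B τ).PosSemidef := by
    refine PosSemidef.of_dotProduct_mulVec_nonneg (hsymm τ hτ.1) fun w => ?_
    rw [star_trivial]
    have hc : Continuous fun s => w ⬝ᵥ (B s *ᵥ w) :=
      hq.comp (by fun_prop : Continuous fun s => (s, w))
    refine ge_of_tendsto (hc.continuousAt.tendsto.mono_left nhdsWithin_le_nhds :
      Filter.Tendsto _ (nhdsWithin τ (Set.Iio τ)) _) ?_
    filter_upwards [Ioo_mem_nhdsLT hτ0] with s hs using hbefore s hs.1.le hs.2 w
  have hzero : v ⬝ᵥ (B τ *ᵥ v) = 0 :=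
    le_antisymm hle (by simpa using hpsd.dotProduct_mulVec_nonneg v)
  have hker : B τ *ᵥ v = 0 := (hpsd.dotProduct_mulVec_zero_iff v).1 (by simpa using hzero)
  have hker' : v ᵥ* B τ = 0 := by
    have hs := hsymm τ hτ.1
    rw [IsHermitian, conjTranspose_eq_transpose_of_trivial] at hs
    rw [← hs, vecMul_transpose, hker]
  have hder : HasDerivAt (fun s => v ⬝ᵥ (B s *ᵥ v)) (v ⬝ᵥ (B' τ *ᵥ v)) τ := by
    simp only [dotProduct, mulVec]
    exact HasDerivAt.fun_sum fun i _ => HasDerivAt.const_mul _ <|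
      HasDerivAt.fun_sum fun j _ => (hB τ i j).mul_const _
  have hval : v ⬝ᵥ (B' τ *ᵥ v) = 1 / We * (v ⬝ᵥ v) := by
    rw [heq τ hτ.1, add_mulVec, sub_mulVec, add_mulVec, smul_mulVec, smul_mulVec,
      ← mulVec_mulVec, ← mulVec_mulVec, hker, one_mulVec]
    have e : v ⬝ᵥ (B τ *ᵥ ((G τ)ᵀ *ᵥ v)) = 0 := by rw [dotProduct_mulVec, hker', zero_dotProduct]
    simp only [dotProduct_add, dotProduct_sub, dotProduct_smul, mulVec_zero, smul_zero,
      dotProduct_zero, e, smul_eq_mul]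
    ring
  have hpos : 0 < v ⬝ᵥ v := by simpa using dotProduct_star_self_pos_iff.2 hv0
  have := deriv_nonpos_of_nonneg_left hτ0 hder hzero fun s hs hsτ => hbefore s hs hsτ v
  rw [hval] at this
  have : 0 < 1 / We * (v ⬝ᵥ v) := by positivity
  linarith
end

section
/- For every symmetric positive definite real d×d matrix M (with d ≥ 1), one has − ln(det M) − d + tr M ≤ tr((I − M⁻¹)² M). -/
/-!
Since `(I - M⁻¹)² M = M - 2 I + M⁻¹`, the claim reduces to `ln (det N) ≤ tr N - d` for the
positive definite matrix `N = M⁻¹`. This is the sum of `ln t ≤ t - 1` over the eigenvalues `t`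
of `N` (`log_det_le_trace_sub`).
-/

lemma log_det_le_trace_sub {d : ℕ} {N : Matrix (Fin d) (Fin d) ℝ} (hN : N.PosDef) :
    Real.log N.det ≤ N.trace - d := by
  rw [hN.1.det_eq_prod_eigenvalues, hN.1.trace_eq_sum_eigenvalues]
  simp only [RCLike.ofReal_real_eq_id, id]
  rw [Real.log_prod fun i _ => (hN.eigenvalues_pos i).ne']
  calc ∑ i, Real.log (hN.1.eigenvalues i)
      ≤ ∑ i, (hN.1.eigenvalues i - 1) :=
        Finset.sum_le_sum fun i _ => Real.log_le_sub_one_of_pos (hN.eigenvalues_pos i)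
    _ = ∑ i, hN.1.eigenvalues i - d := by simp [Finset.sum_sub_distrib]

/-- For every symmetric positive definite real `d × d` matrix `M` (with `d ≥ 1`),
`- ln (det M) - d + tr M ≤ tr ((I - M⁻¹)² M)` (the log-Sobolev inequality for Gaussian
random variables translated to their covariance matrices). -/
theorem entropy_le_fisher_information (d : ℕ) (hd : 1 ≤ d)
    (M : Matrix (Fin d) (Fin d) ℝ) (hM : M.PosDef) :
    -Real.log M.det - d + M.trace ≤ ((1 - M⁻¹) ^ 2 * M).trace := by
  have hinv : M⁻¹ * M = 1 := Matrix.nonsing_inv_mul M hM.det_pos.ne'.isUnit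
  have hexp : (1 - M⁻¹) ^ 2 * M = M - 1 - 1 + M⁻¹ := by
    have h : (1 - M⁻¹) * M = M - 1 := by rw [sub_mul, one_mul, hinv]
    rw [pow_two, mul_assoc, h, mul_sub, h, mul_one]
    abel
  have hlog := log_det_le_trace_sub hM.inv
  rw [Matrix.det_nonsing_inv, Ring.inverse_eq_inv', Real.log_inv] at hlog
  rw [hexp, Matrix.trace_add, Matrix.trace_sub, Matrix.trace_sub, Matrix.trace_one,
    Fintype.card_fin]
  linarith
end

section
/- Let d ≥ 1 and b > 0 be a real number. For every symmetric positive definite real d×d matrix M with tr M < b, one has − ln(det M) − b · ln(1 − tr M / b) ≥ −(b + d) · ln(b / (b + d)). -/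
/-!
By concavity, `log` lies below its tangent line at `c = b / (b + d)`. Summing the tangent-line
bound over the eigenvalues of `M` (weight one each) and over the point `1 - tr M / b` (weight `b`),
the trace cancels from the linear part, which reduces to `b / c - (b + d) = 0`. What remains is
`(b + d) * log c`.
-/

lemma log_le_tangent {c x : ℝ} (hc : 0 < c) (hx : 0 < x) :
    Real.log x ≤ Real.log c + (x / c - 1) := by
  have h := Real.log_le_sub_one_of_pos (div_pos hx hc)
  rw [Real.log_div hx.ne' hc.ne'] at h
  linarith

/-- Let `d ≥ 1` and `b > 0`. For every symmetric positive definite real `d × d` matrix `M`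
with `tr M < b`, `- ln (det M) - b * ln (1 - tr M / b) ≥ -(b + d) * ln (b / (b + d))`
(lower bound for the FENE-P entropy). -/
theorem fenep_entropy_lower_bound (d : ℕ) (hd : 1 ≤ d) (b : ℝ) (hb : 0 < b)
    (M : Matrix (Fin d) (Fin d) ℝ) (hM : M.PosDef) (htr : M.trace < b) :
    -Real.log M.det - b * Real.log (1 - M.trace / b) ≥
      -(b + d) * Real.log (b / (b + d)) := by
  have hbd : 0 < b + d := by positivity
  have hc : 0 < b / (b + d) := div_pos hb hbd
  have hdet : Real.log M.det = ∑ i, Real.log (hM.1.eigenvalues i) := by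
    rw [hM.1.det_eq_prod_eigenvalues]
    exact Real.log_prod fun i _ => (hM.eigenvalues_pos i).ne'
  have htrace : M.trace = ∑ i, hM.1.eigenvalues i := by
    simpa using hM.1.trace_eq_sum_eigenvalues
  have hsum : Real.log M.det ≤
      d * Real.log (b / (b + d)) + (M.trace / (b / (b + d)) - d) := by
    rw [hdet, htrace]
    refine (Finset.sum_le_sum fun i _ => log_le_tangent hc (hM.eigenvalues_pos i)).trans_eq ?_
    simp [Finset.sum_add_distrib, Finset.sum_div]
  have hx : 0 < 1 - M.trace / b := by
    rw [sub_pos, div_lt_one hb]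
    exact htr
  have hlast := mul_le_mul_of_nonneg_left (log_le_tangent hc hx) hb.le
  have hcancel : M.trace / (b / (b + d)) - d +
      b * ((1 - M.trace / b) / (b / (b + d)) - 1) = 0 := by
    field_simp
    ring
  linarith
end

section
/- Let d ≥ 1 and b > 0 be a real number. For every symmetric positive definite real d×d matrix M with tr M < b, one has − ln(det M) − b · ln(1 − tr M / b) + (b + d) · ln(b / (b + d)) ≤ tr M / (1 − tr M / b)² − 2d / (1 − tr M / b) + tr(M⁻¹). -/
/-!
Let `λᵢ > 0` be the eigenvalues of `M` and `z = 1 / (1 - tr M / b) ≥ 1`. With `μᵢ = z λᵢ`, the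
right-hand side is `z * ∑ (μᵢ - 2 + 1 / μᵢ)`, a sum of nonnegative terms multiplied by `z ≥ 1`.
With `z₀ = (b + d) / b`, the left-hand side is `- ∑ ln μᵢ + (b + d) * ln (z / z₀)`. The bound
`ln x ≤ x - 1` at `x = 1 / μᵢ` and at `x = z / z₀`, together with
`(b + d) * (z / z₀ - 1) = b * (z - z₀) = ∑ (μᵢ - 1)`, bounds it by `∑ (μᵢ - 2 + 1 / μᵢ)`.
-/

theorem trace_inv_eq_sum_inv_eigenvalues {d : ℕ} {M : Matrix (Fin d) (Fin d) ℝ}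
    (hM : M.PosDef) : (M⁻¹).trace = ∑ i, (hM.isHermitian.eigenvalues i)⁻¹ := by
  set U := hM.isHermitian.eigenvectorUnitary with hU
  have hs := hM.isHermitian.spectral_theorem
  have hpos := hM.eigenvalues_pos
  have hUU : (star U : Matrix (Fin d) (Fin d) ℝ) * (U : Matrix (Fin d) (Fin d) ℝ) = 1 :=
    Unitary.coe_star_mul_self U
  have hUU' : (U : Matrix (Fin d) (Fin d) ℝ) * (star U : Matrix (Fin d) (Fin d) ℝ) = 1 :=
    Unitary.coe_mul_star_self U
  have hD : Matrix.diagonal (hM.isHermitian.eigenvalues) *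
      Matrix.diagonal (fun i => (hM.isHermitian.eigenvalues i)⁻¹) = 1 := by
    rw [Matrix.diagonal_mul_diagonal, ← Matrix.diagonal_one]
    congr 1
    funext i
    exact mul_inv_cancel₀ (hpos i).ne'
  have hs' : M = (U : Matrix (Fin d) (Fin d) ℝ) *
      Matrix.diagonal (hM.isHermitian.eigenvalues) * star (U : Matrix (Fin d) (Fin d) ℝ) := by
    simpa [Unitary.conjStarAlgAut_apply, Function.comp_def] using hs
  have hinv : M⁻¹ = (U : Matrix (Fin d) (Fin d) ℝ) *
      Matrix.diagonal (fun i => (hM.isHermitian.eigenvalues i)⁻¹) *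
        star (U : Matrix (Fin d) (Fin d) ℝ) := by
    apply Matrix.inv_eq_right_inv
    calc M * _ = ((U : Matrix (Fin d) (Fin d) ℝ) *
          Matrix.diagonal (hM.isHermitian.eigenvalues) * star (U : Matrix (Fin d) (Fin d) ℝ)) *
          ((U : Matrix (Fin d) (Fin d) ℝ) *
          Matrix.diagonal (fun i => (hM.isHermitian.eigenvalues i)⁻¹) *
          star (U : Matrix (Fin d) (Fin d) ℝ)) := congrArg (· * _) hs'
      _ = (U : Matrix (Fin d) (Fin d) ℝ) * (Matrix.diagonal (hM.isHermitian.eigenvalues) *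
          (star (U : Matrix (Fin d) (Fin d) ℝ) * (U : Matrix (Fin d) (Fin d) ℝ)) *
          Matrix.diagonal (fun i => (hM.isHermitian.eigenvalues i)⁻¹)) *
          star (U : Matrix (Fin d) (Fin d) ℝ) := by simp only [Matrix.mul_assoc]
      _ = 1 := by rw [hUU, Matrix.mul_one, hD, Matrix.mul_one, hUU']
  rw [hinv, Matrix.trace_mul_cycle, hUU, Matrix.one_mul, Matrix.trace_diagonal]


/-- Let `d ≥ 1` and `b > 0`. For every symmetric positive definite real `d × d` matrix `M`
with `tr M < b`,
`- ln (det M) - b * ln (1 - tr M / b) + (b + d) * ln (b / (b + d))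
  ≤ tr M / (1 - tr M / b)² - 2 d / (1 - tr M / b) + tr (M⁻¹)`
(the analogue of the log-Sobolev inequality for the FENE-P model). -/
theorem fenep_entropy_le_fisher_information (d : ℕ) (hd : 1 ≤ d) (b : ℝ) (hb : 0 < b)
    (M : Matrix (Fin d) (Fin d) ℝ) (hM : M.PosDef) (htr : M.trace < b) :
    -Real.log M.det - b * Real.log (1 - M.trace / b) + (b + d) * Real.log (b / (b + d)) ≤
      M.trace / (1 - M.trace / b) ^ 2 - 2 * d / (1 - M.trace / b) + (M⁻¹).trace := by

  have hpos := hM.eigenvalues_pos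
  have htrace : M.trace = ∑ i, hM.isHermitian.eigenvalues i := by
    simpa using hM.isHermitian.trace_eq_sum_eigenvalues
  have hdet : Real.log M.det = ∑ i, Real.log (hM.isHermitian.eigenvalues i) := by
    have h : M.det = ∏ i, hM.isHermitian.eigenvalues i := by
      simpa using hM.isHermitian.det_eq_prod_eigenvalues
    rw [h, Real.log_prod fun i _ => (hpos i).ne']
  have htr0 : 0 ≤ M.trace := htrace ▸ Finset.sum_nonneg fun i _ => (hpos i).le
  have hw : 0 < 1 - M.trace / b := by rw [sub_pos, div_lt_one hb]; exact htr
  obtain ⟨z, hz⟩ : ∃ z, z = (1 - M.trace / b)⁻¹ := ⟨_, rfl⟩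
  have hz0 : 0 < z := hz ▸ inv_pos.mpr hw
  have hz1 : 1 ≤ z := hz ▸ (one_le_inv₀ hw).mpr (sub_le_self _ (by positivity))
  have hwz : 1 - M.trace / b = z⁻¹ := by rw [hz, inv_inv]
  have hzs : z * M.trace = b * (z - 1) := by
    have h : M.trace = b * (1 - z⁻¹) := by rw [← hwz]; field_simp; ring
    rw [h]; field_simp
  have hlogdet : -Real.log M.det ≤ d * Real.log z + (M⁻¹).trace / z - d := by
    rw [hdet, trace_inv_eq_sum_inv_eigenvalues hM, Finset.sum_div, ← Finset.sum_neg_distrib]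
    calc _ ≤ ∑ i, (Real.log z + (hM.isHermitian.eigenvalues i)⁻¹ / z - 1) := by
          refine Finset.sum_le_sum fun i _ => ?_
          have h := Real.log_le_sub_one_of_pos (div_pos (inv_pos.mpr (hpos i)) hz0)
          rw [Real.log_div (inv_pos.mpr (hpos i)).ne' hz0.ne', Real.log_inv] at h
          linarith
      _ = _ := by simp [Finset.sum_add_distrib, Finset.sum_sub_distrib]
  have hnonneg : 0 ≤ z * M.trace - 2 * d + (M⁻¹).trace / z := by
    have h : z * M.trace - 2 * d + (M⁻¹).trace / z = ∑ i, (z * hM.isHermitian.eigenvalues i - 2 +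
        (hM.isHermitian.eigenvalues i)⁻¹ / z) := by
      rw [htrace, trace_inv_eq_sum_inv_eigenvalues hM, Finset.sum_div, Finset.mul_sum]
      simp [Finset.sum_add_distrib, Finset.sum_sub_distrib, mul_comm]
    rw [h]
    refine Finset.sum_nonneg fun i _ => ?_
    have hi := hpos i
    have h2 : z * hM.isHermitian.eigenvalues i - 2 + (hM.isHermitian.eigenvalues i)⁻¹ / z =
        (z * hM.isHermitian.eigenvalues i - 1) ^ 2 / (z * hM.isHermitian.eigenvalues i) := by
      field_simp; ring
    rw [h2]; positivity
  have hbd : 0 < b + d := by positivity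
  have hlogz : (b + d) * (Real.log z + Real.log (b / (b + d))) ≤ b * z - (b + d) := by
    have h := Real.log_le_sub_one_of_pos (mul_pos hz0 (div_pos hb hbd))
    rw [Real.log_mul hz0.ne' (div_pos hb hbd).ne'] at h
    calc _ ≤ (b + d) * (z * (b / (b + d)) - 1) := mul_le_mul_of_nonneg_left h hbd.le
      _ = _ := by field_simp
  -- Both bounds give the inequality with the factor `z` missing; `z ≥ 1` restores it.
  have hscale := mul_le_mul_of_nonneg_right hz1 hnonneg
  have hrhs : M.trace / (1 - M.trace / b) ^ 2 - 2 * d / (1 - M.trace / b) + (M⁻¹).trace =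
      z * (z * M.trace - 2 * d + (M⁻¹).trace / z) := by
    rw [hwz]; field_simp
  rw [hrhs, hwz, Real.log_inv]
  linarith
end
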